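/- arXiv:1902.03394 — 2 statements merged into one kernel-verified Lean document; each statement's English description precedes it below -/
import Mathlib

section
/- Let F : ℝ^d × ℝ^d → ℝ^d and fix z = (x_1,…,x_N) ∈ (ℝ^d)^N. Let C_i denote the random batch containing index i under a uniformly random partition of {1,…,N} into n batches of size p, and define the noise χ_i(z) = (1/N)·Σ_{j≠i} F(x_i,x_j) − (1−1/N)·(1/(p−1))·Σ_{j∈C_i, j≠i} F(x_i,x_j). Then E[χ_i(z)] = 0. -/
open Finset

/-- A finset `P` of subsets of `{1,…,N}` (modeled as `Fin N`) is a batch partition into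
`n` batches of size `p` if it has `n` members, each of size `p`, and every index lies in
exactly one member. -/
def IsBatchPartition (N n p : ℕ) (P : Finset (Finset (Fin N))) : Prop :=
  P.card = n ∧ (∀ B ∈ P, B.card = p) ∧ ∀ i : Fin N, (P.filter fun B => i ∈ B).card = 1

instance (N n p : ℕ) : DecidablePred (IsBatchPartition N n p) := fun P => by
  unfold IsBatchPartition; infer_instance

/-- The batch containing index `i` in the partition `P`: the set of indices lying in a
common member of `P` with `i`. -/
def batchOf {N n p : ℕ} (P : {P : Finset (Finset (Fin N)) // IsBatchPartition N n p P})
    (i : Fin N) : Finset (Fin N) :=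
  Finset.univ.filter fun j => ∃ B ∈ P.1, i ∈ B ∧ j ∈ B

/-- The random-batch noise `χ_i(z)`: the difference between the full interaction force
`(1/N)·Σ_{j≠i} F(x_i,x_j)` and the random-batch force
`(1−1/N)·(1/(p−1))·Σ_{j∈C_i, j≠i} F(x_i,x_j)`, where `C_i` is the batch containing `i`. -/
noncomputable def rbmNoise {d N n p : ℕ} (F : EuclideanSpace ℝ (Fin d) →
      EuclideanSpace ℝ (Fin d) → EuclideanSpace ℝ (Fin d))
    (x : Fin N → EuclideanSpace ℝ (Fin d)) (i : Fin N)
    (P : {P : Finset (Finset (Fin N)) // IsBatchPartition N n p P}) :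
    EuclideanSpace ℝ (Fin d) :=
  ((N : ℝ)⁻¹) • ∑ j ∈ Finset.univ.erase i, F (x i) (x j)
    - ((1 - (N : ℝ)⁻¹) * ((p : ℝ) - 1)⁻¹) • ∑ j ∈ (batchOf P i).erase i, F (x i) (x j)

/-- Relabelling the indices by a permutation maps batch partitions to batch partitions. -/
theorem IsBatchPartition.map {N n p : ℕ} {P : Finset (Finset (Fin N))}
    (h : IsBatchPartition N n p P) (σ : Equiv.Perm (Fin N)) :
    IsBatchPartition N n p (P.map σ.finsetCongr.toEmbedding) := by
  obtain ⟨hcard, hsize, huniq⟩ := h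
  refine ⟨by simpa using hcard, ?_, fun i => ?_⟩
  · intro B hB
    obtain ⟨C, hC, rfl⟩ := Finset.mem_map.mp hB
    simpa using hsize C hC
  · rw [Finset.filter_map, Finset.card_map, ← huniq (σ.symm i)]
    congr 1
    ext B
    simp [Finset.mem_map_equiv]

/-- Each batch contains the index that designates it. -/
theorem self_mem_batchOf {N n p : ℕ}
    (P : {P : Finset (Finset (Fin N)) // IsBatchPartition N n p P}) (i : Fin N) :
    i ∈ batchOf P i := by
  obtain ⟨B, hB⟩ := Finset.card_eq_one.mp (P.2.2.2 i)
  have hmem : B ∈ P.1.filter fun B => i ∈ B := by simp [hB]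
  rw [Finset.mem_filter] at hmem
  simpa [batchOf] using ⟨B, hmem⟩

/-- Each batch has size `p`. -/
theorem card_batchOf {N n p : ℕ}
    (P : {P : Finset (Finset (Fin N)) // IsBatchPartition N n p P}) (i : Fin N) :
    (batchOf P i).card = p := by
  obtain ⟨B, hB⟩ := Finset.card_eq_one.mp (P.2.2.2 i)
  have hiff : ∀ C, (C ∈ P.1 ∧ i ∈ C) ↔ C = B := fun C => by
    rw [← Finset.mem_singleton, ← hB, Finset.mem_filter]
  have hbatch : batchOf P i = B := by
    ext j
    simp [batchOf, ← and_assoc, hiff]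
  rw [hbatch]
  exact P.2.2.1 B ((hiff B).2 rfl).1

/-- Relabelling the indices relabels batches accordingly. -/
theorem apply_mem_batchOf_map {N n p : ℕ}
    (P : {P : Finset (Finset (Fin N)) // IsBatchPartition N n p P}) (σ : Equiv.Perm (Fin N))
    {i j : Fin N} (h : j ∈ batchOf P i) :
    σ j ∈ batchOf (⟨_, P.2.map σ⟩ :
      {P : Finset (Finset (Fin N)) // IsBatchPartition N n p P}) (σ i) := by
  simp only [batchOf, Finset.mem_filter, Finset.mem_univ, true_and] at h ⊢
  obtain ⟨B, hB, hi, hj⟩ := h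
  exact ⟨_, Finset.mem_map_of_mem _ hB, by simpa using hi, by simpa using hj⟩

/-- The number of batch partitions putting `j` in the batch of `i` is the same for all `j ≠ i`. -/
theorem card_filter_mem_batchOf_eq {N n p : ℕ} {i j k : Fin N} (hj : j ≠ i) (hk : k ≠ i) :
    #{P : {P : Finset (Finset (Fin N)) // IsBatchPartition N n p P} | j ∈ batchOf P i} =
      #{P : {P : Finset (Finset (Fin N)) // IsBatchPartition N n p P} | k ∈ batchOf P i} := by
  have hle : ∀ {j k : Fin N}, j ≠ i → k ≠ i →
      #{P : {P : Finset (Finset (Fin N)) // IsBatchPartition N n p P} | j ∈ batchOf P i} ≤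
        #{P : {P : Finset (Finset (Fin N)) // IsBatchPartition N n p P} | k ∈ batchOf P i} := by
    intro j k hj hk
    refine Finset.card_le_card_of_injOn (fun P => ⟨_, P.2.map (Equiv.swap j k)⟩) ?_ ?_
    · intro P hP
      have hP' : j ∈ batchOf P i := by simpa using hP
      have hmap := apply_mem_batchOf_map P (Equiv.swap j k) hP'
      rw [Equiv.swap_apply_left, Equiv.swap_apply_of_ne_of_ne hj.symm hk.symm] at hmap
      simpa using hmap
    · intro P _ Q _ hPQ
      exact Subtype.ext (Finset.map_injective _ (congrArg Subtype.val hPQ))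
  exact le_antisymm (hle hj hk) (hle hk hj)

/-- Double counting of the pairs of a batch partition and a companion of `i` in its batch. -/
theorem card_filter_mem_batchOf_mul {N n p : ℕ} {i j : Fin N} (hj : j ≠ i) :
    (N - 1) * #{P : {P : Finset (Finset (Fin N)) // IsBatchPartition N n p P} |
        j ∈ batchOf P i} =
      Fintype.card {P : Finset (Finset (Fin N)) // IsBatchPartition N n p P} * (p - 1) := by
  calc _ = ∑ k ∈ univ.erase i,
        #{P : {P : Finset (Finset (Fin N)) // IsBatchPartition N n p P} | k ∈ batchOf P i} := by
        rw [Finset.sum_congr rfl fun k hk =>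
          card_filter_mem_batchOf_eq (Finset.ne_of_mem_erase hk) hj]
        simp
    _ = ∑ P : {P : Finset (Finset (Fin N)) // IsBatchPartition N n p P},
        #{k ∈ univ.erase i | k ∈ batchOf P i} :=
        Finset.sum_card_bipartiteAbove_eq_sum_card_bipartiteBelow _
    _ = ∑ _P : {P : Finset (Finset (Fin N)) // IsBatchPartition N n p P}, (p - 1) := by
        refine Finset.sum_congr rfl fun P _ => ?_
        rw [← (Finset.card_erase_of_mem (self_mem_batchOf P i)).trans
          (congrArg (· - 1) (card_batchOf P i))]
        congr 1
        ext k
        simp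
    _ = _ := by simp

/-- Under a uniformly random partition of `{1,…,N}` into `n` batches of size `p`
(`N = pn`, `p ≥ 2`), the random-batch noise `χ_i(z)` has zero expectation:
the average of `χ_i(z)` over all batch partitions vanishes. -/
theorem rbm_noise_mean_zero (d n p N : ℕ) (hn : 1 ≤ n) (hp : 2 ≤ p) (hN : N = p * n)
    (F : EuclideanSpace ℝ (Fin d) → EuclideanSpace ℝ (Fin d) → EuclideanSpace ℝ (Fin d))
    (x : Fin N → EuclideanSpace ℝ (Fin d)) (i : Fin N) :
    (((Finset.univ : Finset {P : Finset (Finset (Fin N)) // IsBatchPartition N n p P}).card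
        : ℝ)⁻¹) •
      ∑ P : {P : Finset (Finset (Fin N)) // IsBatchPartition N n p P}, rbmNoise F x i P
      = 0 := by
  have hN2 : 2 ≤ N := hN ▸ hp.trans (Nat.le_mul_of_pos_right p hn)
  have hcompanions : ∑ P : {P : Finset (Finset (Fin N)) // IsBatchPartition N n p P},
      ∑ j ∈ (batchOf P i).erase i, F (x i) (x j) =
      ∑ j ∈ univ.erase i,
        (#{P : {P : Finset (Finset (Fin N)) // IsBatchPartition N n p P} |
          j ∈ batchOf P i} : ℝ) • F (x i) (x j) := by
    rw [Finset.sum_comm' (t' := univ.erase i)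
      (s' := fun j => {P | j ∈ batchOf P i}) (by simp [and_comm])]
    simp [Nat.cast_smul_eq_nsmul]
  have hsum : ∑ P : {P : Finset (Finset (Fin N)) // IsBatchPartition N n p P},
      rbmNoise F x i P = 0 := by
    simp only [rbmNoise]
    rw [Finset.sum_sub_distrib, ← Finset.smul_sum, ← Finset.smul_sum, hcompanions,
      Finset.sum_const, Finset.card_univ, ← Nat.cast_smul_eq_nsmul ℝ]
    simp only [Finset.smul_sum, ← Finset.sum_sub_distrib]
    refine Finset.sum_eq_zero fun j hj => ?_
    have hcount := congrArg (Nat.cast (R := ℝ))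
      (card_filter_mem_batchOf_mul (n := n) (p := p) (Finset.ne_of_mem_erase hj))
    rw [Nat.cast_mul, Nat.cast_mul, Nat.cast_sub (by lia), Nat.cast_sub (by lia),
      Nat.cast_one] at hcount
    have hN0 : (N : ℝ) ≠ 0 := by positivity
    have hp1 : (p : ℝ) - 1 ≠ 0 := by
      have : (2 : ℝ) ≤ p := by exact_mod_cast hp
      linarith
    rw [smul_smul, smul_smul, ← sub_smul]
    convert zero_smul ℝ (F (x i) (x j)) using 2
    field_simp
    linear_combination -hcount
  rw [hsum, smul_zero]
end

section
/- Let F : ℝ^d × ℝ^d → ℝ^d, let N = pn ≥ 3 with p ≥ 2, and fix z = (x_1,…,x_N) ∈ (ℝ^d)^N. With χ_i(z) the random-batch noise, its second moment is E|χ_i(z)|² = (1−1/N)²·(1/(p−1) − 1/(N−1))·Λ_i(z), where Λ_i(z) = (1/(N−2))·Σ_{j≠i} | F(x_i,x_j) − (1/(N−1))·Σ_{k≠i} F(x_i,x_k) |². -/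
open Finset

/-- The partition obtained by relabelling the indices through `σ` is again a batch partition. -/
theorem IsBatchPartition.finsetCongr {N n p : ℕ} {P : Finset (Finset (Fin N))}
    (h : IsBatchPartition N n p P) (σ : Equiv.Perm (Fin N)) :
    IsBatchPartition N n p (σ.finsetCongr.finsetCongr P) := by
  obtain ⟨h1, h2, h3⟩ := h
  refine ⟨by simpa using h1, ?_, fun i => ?_⟩
  · intro B hB
    simp only [Equiv.finsetCongr_apply, mem_map, Equiv.coe_toEmbedding] at hB
    obtain ⟨A, hA, rfl⟩ := hB
    simpa using h2 A hA
  · rw [← h3 (σ.symm i), Equiv.finsetCongr_apply, Finset.filter_map, card_map]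
    congr 1
    ext B
    simp [Finset.mem_map_equiv]

/-- If `n` batches of size `p` exhaust `N` indices, a batch partition exists. -/
theorem exists_isBatchPartition {N n p : ℕ} (hp : 0 < p) (hN : N = p * n) :
    ∃ P, IsBatchPartition N n p P := by
  have e : Fin N ≃ Fin p × Fin n := (finCongr hN).trans finProdFinEquiv.symm
  let f : Fin n → Finset (Fin N) := fun b => univ.filter fun i => (e i).2 = b
  have hf (b : Fin n) (i : Fin N) : i ∈ f b ↔ (e i).2 = b := by simp [f]
  have hinj : Function.Injective f := by
    intro b c hbc
    have h1 : e.symm (⟨0, hp⟩, b) ∈ f b := by simp [hf]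
    rw [hbc, hf] at h1
    simpa using h1
  refine ⟨univ.image f, ?_, ?_, fun i => ?_⟩
  · simp [card_image_of_injective _ hinj]
  · intro B hB
    obtain ⟨b, -, rfl⟩ := mem_image.1 hB
    have : f b = (univ : Finset (Fin p)).image fun a => e.symm (a, b) := by
      ext i
      simp only [hf, mem_image, mem_univ, true_and, Equiv.symm_apply_eq]
      exact ⟨fun h => ⟨(e i).1, by rw [← h]⟩, fun ⟨a, ha⟩ => by rw [← ha]⟩
    rw [this, card_image_of_injective]
    · simp
    · intro a a' h
      simpa using h
  · rw [card_eq_one]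
    refine ⟨f (e i).2, ?_⟩
    ext B
    simp only [mem_filter, mem_image, mem_univ, true_and, mem_singleton]
    constructor
    · rintro ⟨⟨b, rfl⟩, hb⟩
      rw [(hf _ _).1 hb]
    · rintro rfl
      exact ⟨⟨_, rfl⟩, (hf _ _).2 rfl⟩

section batchOf

variable {N n p : ℕ}

theorem self_mem_batchOf_and_card
    (P : {P : Finset (Finset (Fin N)) // IsBatchPartition N n p P}) (i : Fin N) :
    i ∈ batchOf P i ∧ (batchOf P i).card = p := by
  obtain ⟨-, h2, h3⟩ := P.2
  obtain ⟨B, hB⟩ := card_eq_one.1 (h3 i)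
  have hmem (A : Finset (Fin N)) : (A ∈ P.1 ∧ i ∈ A) ↔ A = B := by
    rw [← mem_singleton, ← hB, mem_filter]
  have hBP := (hmem B).2 rfl
  have hbatch : batchOf P i = B := by
    ext j
    simp [batchOf, ← and_assoc, hmem]
  rw [hbatch]
  exact ⟨hBP.2, h2 B hBP.1⟩

/-- The number of batch partitions that put `j` and `k` in the batch of `i` is invariant under
relabellings that fix `i`. -/
theorem card_filter_mem_batchOf_perm {i : Fin N} (σ : Equiv.Perm (Fin N)) (hσ : σ i = i)
    (j k : Fin N) :
    (univ.filter fun P : {P : Finset (Finset (Fin N)) // IsBatchPartition N n p P} =>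
      σ j ∈ batchOf P i ∧ σ k ∈ batchOf P i).card =
    (univ.filter fun P : {P : Finset (Finset (Fin N)) // IsBatchPartition N n p P} =>
      j ∈ batchOf P i ∧ k ∈ batchOf P i).card := by
  let T : {P : Finset (Finset (Fin N)) // IsBatchPartition N n p P} ≃
      {P : Finset (Finset (Fin N)) // IsBatchPartition N n p P} :=
    σ.finsetCongr.finsetCongr.subtypeEquiv fun P =>
      ⟨fun h => h.finsetCongr σ, fun h => by
        simpa only [← Equiv.finsetCongr_symm, Equiv.symm_apply_apply] using h.finsetCongr σ.symm⟩
  have hT (P) (l : Fin N) : σ l ∈ batchOf (T P) i ↔ l ∈ batchOf P i := by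
    have hi (a : Fin N) : σ a = i ↔ a = i := by
      conv_lhs => rw [← hσ, σ.apply_eq_iff_eq]
    have hTP : (T P).1 = P.1.map σ.finsetCongr.toEmbedding := rfl
    simp only [batchOf, mem_filter, mem_univ, true_and, hTP, mem_map, exists_exists_and_eq_and,
      Equiv.coe_toEmbedding, Equiv.finsetCongr_apply, hi, σ.apply_eq_iff_eq,
      exists_eq_right]
  symm
  refine card_equiv T fun P => ?_
  simp [hT]

end batchOf

/-- A function on ordered pairs that is invariant under transpositions fixing `i` is constant on
pairs of distinct elements other than `i`. -/
theorem eq_of_swap_invariant {ι α : Type*} [DecidableEq ι] {i : ι} (c : ι → ι → α)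
    (hc : ∀ σ : Equiv.Perm ι, σ i = i → ∀ j k, c (σ j) (σ k) = c j k)
    {j k j' k' : ι} (hj : j ≠ i) (hk : k ≠ i) (hj' : j' ≠ i) (hk' : k' ≠ i)
    (hjk : j ≠ k) (hjk' : j' ≠ k') : c j k = c j' k' := by
  have hs {a b : ι} (ha : a ≠ i) (hb : b ≠ i) : Equiv.swap a b i = i :=
    Equiv.swap_apply_of_ne_of_ne ha.symm hb.symm
  have hr {a b b' : ι} (hb : b ≠ i) (hb' : b' ≠ i) (hab : a ≠ b) (hab' : a ≠ b') :
      c a b = c a b' := by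
    simpa [Equiv.swap_apply_of_ne_of_ne hab hab'] using (hc _ (hs hb hb') a b).symm
  by_cases h : k = j'
  · subst h
    have h1 : c k j = c j k := by simpa using hc _ (hs hj hk) j k
    rw [← h1]
    exact hr hj hk' hjk.symm hjk'
  · have h1 : c j' k = c j k := by
      simpa [Equiv.swap_apply_of_ne_of_ne hjk.symm h] using hc _ (hs hj hj') j k
    rw [← h1]
    exact hr hk hk' (Ne.symm h) hjk'

/-- Second moment of the sum of a centred population `G` over a random sample `C ω` of fixed size,
when the inclusion counts of single elements and of pairs of distinct elements are constant. -/
theorem sum_norm_sq_sum_sample {ι Ω E : Type*} [DecidableEq ι] [Fintype Ω]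
    [NormedAddCommGroup E] [InnerProductSpace ℝ E] (S : Finset ι) (C : Ω → Finset ι) (m : ℕ)
    (hCS : ∀ ω, C ω ⊆ S) (hCm : ∀ ω, (C ω).card = m) (a b : ℕ)
    (ha : ∀ j ∈ S, (univ.filter fun ω => j ∈ C ω).card = a)
    (hb : ∀ j ∈ S, ∀ k ∈ S, j ≠ k → (univ.filter fun ω => j ∈ C ω ∧ k ∈ C ω).card = b)
    (G : ι → E) (hG : ∑ j ∈ S, G j = 0) :
    (S.card : ℝ) * (S.card - 1) * ∑ ω, ‖∑ j ∈ C ω, G j‖ ^ 2 =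
      Fintype.card Ω * (m * (S.card - m)) * ∑ j ∈ S, ‖G j‖ ^ 2 := by
  have hsub (ω : Ω) (f : ι → ℝ) : ∑ j ∈ C ω, f j = ∑ j ∈ S, if j ∈ C ω then f j else 0 := by
    rw [← sum_filter, filter_mem_eq_inter, inter_eq_right.2 (hCS ω)]
  have hpair (j k : ι) : ∑ ω, (if j ∈ C ω then if k ∈ C ω then (1 : ℝ) else 0 else 0) =
      ((univ.filter fun ω => j ∈ C ω ∧ k ∈ C ω).card : ℝ) := by
    simp only [← ite_and, sum_boole]
  have hcount {j k : ι} (hj : j ∈ S) (hk : k ∈ S) :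
      ((univ.filter fun ω => j ∈ C ω ∧ k ∈ C ω).card : ℝ) = b + if j = k then (a - b : ℝ) else 0 := by
    split_ifs with h
    · subst h
      simp [ha j hj]
    · simp [hb j hj k hk h]
  have hsum_a : (S.card : ℝ) * a = Fintype.card Ω * m := by
    calc (S.card : ℝ) * a = ∑ j ∈ S, ∑ ω, (if j ∈ C ω then (1 : ℝ) else 0) := by
          rw [sum_congr rfl fun j hj => by rw [sum_boole, ha j hj]]
          simp
      _ = ∑ ω, ∑ j ∈ C ω, (1 : ℝ) := by
          rw [sum_comm]
          exact sum_congr rfl fun ω _ => (hsub ω _).symm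
      _ = Fintype.card Ω * m := by simp [hCm]
  have hsum_b {j : ι} (hj : j ∈ S) : (S.card : ℝ) * b + (a - b) = m * a := by
    calc (S.card : ℝ) * b + (a - b)
        = ∑ k ∈ S, ∑ ω, (if j ∈ C ω then if k ∈ C ω then (1 : ℝ) else 0 else 0) := by
          rw [sum_congr rfl fun k hk => by rw [hpair, hcount hj hk]]
          simp [sum_add_distrib, hj]
      _ = ∑ ω, (if j ∈ C ω then ∑ k ∈ C ω, (1 : ℝ) else 0) := by
          rw [sum_comm]
          refine sum_congr rfl fun ω _ => ?_
          split_ifs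
          · exact (hsub ω _).symm
          · simp
      _ = m * a := by
          simp only [sum_const, hCm, ← sum_filter, ha j hj]
          simp [mul_comm]
  have hmain : ∑ ω, ‖∑ j ∈ C ω, G j‖ ^ 2 = (a - b) * ∑ j ∈ S, ‖G j‖ ^ 2 := by
    calc ∑ ω, ‖∑ j ∈ C ω, G j‖ ^ 2
        = ∑ ω, ∑ j ∈ S, ∑ k ∈ S,
            (if j ∈ C ω then if k ∈ C ω then (1 : ℝ) else 0 else 0) * inner ℝ (G j) (G k) := by
          refine sum_congr rfl fun ω _ => ?_
          rw [← real_inner_self_eq_norm_sq, sum_inner, hsub]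
          refine sum_congr rfl fun j _ => ?_
          rw [inner_sum, hsub]
          split_ifs <;> simp
      _ = ∑ j ∈ S, ∑ k ∈ S, (b + if j = k then (a - b : ℝ) else 0) * inner ℝ (G j) (G k) := by
          rw [sum_comm]
          refine sum_congr rfl fun j hj => ?_
          rw [sum_comm]
          refine sum_congr rfl fun k hk => ?_
          rw [← sum_mul, hpair, hcount hj hk]
      _ = (a - b) * ∑ j ∈ S, ‖G j‖ ^ 2 := by
          rw [mul_sum]
          refine sum_congr rfl fun j hj => ?_
          simp [add_mul, sum_add_distrib, ← mul_sum, ← inner_sum, hG, hj]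
  rcases S.eq_empty_or_nonempty with rfl | ⟨j, hj⟩
  · simp
  · rw [hmain]
    linear_combination (∑ j ∈ S, ‖G j‖ ^ 2) *
      (((S.card : ℝ) - m) * hsum_a - (S.card : ℝ) * hsum_b hj)

/-- Second moment of the random-batch noise: under a uniformly random partition of
`{1,…,N}` into `n` batches of size `p` (`N = pn ≥ 3`, `p ≥ 2`),
`E|χ_i(z)|² = (1−1/N)²·(1/(p−1) − 1/(N−1))·Λ_i(z)` where
`Λ_i(z) = (1/(N−2))·Σ_{j≠i} |F(x_i,x_j) − (1/(N−1))·Σ_{k≠i} F(x_i,x_k)|²`. -/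
theorem rbm_noise_second_moment (d n p N : ℕ) (hn : 1 ≤ n) (hp : 2 ≤ p) (hN : N = p * n)
    (hN3 : 3 ≤ N)
    (F : EuclideanSpace ℝ (Fin d) → EuclideanSpace ℝ (Fin d) → EuclideanSpace ℝ (Fin d))
    (x : Fin N → EuclideanSpace ℝ (Fin d)) (i : Fin N) :
    (((Finset.univ : Finset {P : Finset (Finset (Fin N)) // IsBatchPartition N n p P}).card
        : ℝ)⁻¹) *
      ∑ P : {P : Finset (Finset (Fin N)) // IsBatchPartition N n p P}, ‖rbmNoise F x i P‖ ^ 2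
      = (1 - (N : ℝ)⁻¹) ^ 2 * (((p : ℝ) - 1)⁻¹ - ((N : ℝ) - 1)⁻¹) *
        (((N : ℝ) - 2)⁻¹ *
          ∑ j ∈ Finset.univ.erase i,
            ‖F (x i) (x j) - ((N : ℝ) - 1)⁻¹ • ∑ k ∈ Finset.univ.erase i, F (x i) (x k)‖ ^ 2) := by
  set m : EuclideanSpace ℝ (Fin d) :=
    ((N : ℝ) - 1)⁻¹ • ∑ k ∈ Finset.univ.erase i, F (x i) (x k) with hm
  have hNr : (3 : ℝ) ≤ N := by exact_mod_cast hN3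
  have hpr : (2 : ℝ) ≤ p := by exact_mod_cast hp
  have hN0 : (N : ℝ) ≠ 0 := by linarith
  have hN1 : (N : ℝ) - 1 ≠ 0 := by linarith
  have hN2 : (N : ℝ) - 2 ≠ 0 := by linarith
  have hp1 : (p : ℝ) - 1 ≠ 0 := by linarith
  have hScard : (((univ : Finset (Fin N)).erase i).card : ℝ) = N - 1 := by
    rw [card_erase_of_mem (mem_univ i), card_univ, Fintype.card_fin, Nat.cast_pred (by omega)]
  have hCcard (P : {P : Finset (Finset (Fin N)) // IsBatchPartition N n p P}) :
      ((batchOf P i).erase i).card = p - 1 := by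
    rw [card_erase_of_mem (self_mem_batchOf_and_card P i).1, (self_mem_batchOf_and_card P i).2]
  have hpcast : ((p - 1 : ℕ) : ℝ) = p - 1 := by rw [Nat.cast_pred (by omega)]
  have hsum : ∑ k ∈ univ.erase i, F (x i) (x k) = ((N : ℝ) - 1) • m := by
    rw [hm, smul_inv_smul₀ hN1]
  clear_value m
  have hG : ∑ j ∈ univ.erase i, (F (x i) (x j) - m) = 0 := by
    rw [sum_sub_distrib, hsum, sum_const, ← Nat.cast_smul_eq_nsmul ℝ, hScard, sub_self]
  have hnoise (P : {P : Finset (Finset (Fin N)) // IsBatchPartition N n p P}) :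
      ‖rbmNoise F x i P‖ ^ 2 = ((1 - (N : ℝ)⁻¹) * ((p : ℝ) - 1)⁻¹) ^ 2 *
        ‖∑ j ∈ (batchOf P i).erase i, (F (x i) (x j) - m)‖ ^ 2 := by
    have : rbmNoise F x i P = -(((1 - (N : ℝ)⁻¹) * ((p : ℝ) - 1)⁻¹) •
        ∑ j ∈ (batchOf P i).erase i, (F (x i) (x j) - m)) := by
      rw [rbmNoise, sum_sub_distrib, hsum, sum_const, hCcard, ← Nat.cast_smul_eq_nsmul ℝ, hpcast,
        smul_sub, neg_sub, smul_smul, smul_smul]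
      congr 2
      field_simp
    rw [this, norm_neg, norm_smul, mul_pow, Real.norm_eq_abs, sq_abs]
  let c (j k : Fin N) : ℕ :=
    (univ.filter fun P : {P : Finset (Finset (Fin N)) // IsBatchPartition N n p P} =>
      j ∈ batchOf P i ∧ k ∈ batchOf P i).card
  have hc (σ : Equiv.Perm (Fin N)) (hσ : σ i = i) (j k : Fin N) : c (σ j) (σ k) = c j k :=
    card_filter_mem_batchOf_perm σ hσ j k
  obtain ⟨u, hu, v, hv, huv⟩ : ∃ u ∈ (univ : Finset (Fin N)).erase i,
      ∃ v ∈ (univ : Finset (Fin N)).erase i, u ≠ v := by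
    rw [← one_lt_card, card_erase_of_mem (mem_univ i), card_univ, Fintype.card_fin]
    omega
  have hu := ne_of_mem_erase hu
  have hv := ne_of_mem_erase hv
  have key := sum_norm_sq_sum_sample (univ.erase i)
    (fun P : {P : Finset (Finset (Fin N)) // IsBatchPartition N n p P} => (batchOf P i).erase i)
    (p - 1) (fun P => erase_subset_erase _ (subset_univ _)) hCcard (c u u) (c u v)
    (fun j hj => by
      have hj := ne_of_mem_erase hj
      simpa [c, hj] using hc (Equiv.swap j u) (Equiv.swap_apply_of_ne_of_ne hj.symm hu.symm) u u)
    (fun j hj k hk hjk => by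
      have hj := ne_of_mem_erase hj
      have hk := ne_of_mem_erase hk
      simpa [c, hj, hk] using eq_of_swap_invariant c hc hj hk hu hv hjk huv)
    (fun j => F (x i) (x j) - m) hG
  obtain ⟨P₀, hP₀⟩ := exists_isBatchPartition (by omega) hN
  have hΩ : (Fintype.card {P : Finset (Finset (Fin N)) // IsBatchPartition N n p P} : ℝ) ≠ 0 :=
    Nat.cast_ne_zero.2 (Fintype.card_pos_iff.2 ⟨⟨P₀, hP₀⟩⟩).ne'
  rw [hScard, hpcast] at key
  rw [sum_congr rfl fun P _ => hnoise P, ← mul_sum, card_univ]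
  rw [show ((N : ℝ) - 1 - 1) = N - 2 by ring] at key
  rw [eq_div_of_mul_eq (mul_ne_zero hN1 hN2) ((mul_comm _ _).trans key)]
  field_simp
end
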